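/- For the quadruple (10, 15, 32, 48): the largest integer not representable as a non-negative integer linear combination of (10, 15, 32, 48) is 101, and the largest integer having exactly one such representation is 99; in particular g_0(10,15,32,48) = 101 > 99 = g_1(10,15,32,48). -/

import Mathlib

/-!
Grouping `10a + 15b + 32c + 48d = 5(2a + 3b) + 16(2c + 3d)`, the representations of `t` correspond
to decompositions `t = 5u + 16k` together with representations of `u` and of `k` by `(2, 3)`.
Every `u ≥ 2` is of the form `2a + 3b`, every `u ≥ 8` is so in two ways, and `6` is so in two ways.

If `t > 101`, or `t = 100`, take `k ∈ {0, 6, 2, 3, 4}`, a complete residue system modulo `5`, with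
`16k ≡ t (mod 5)`. For `k ≠ 6` the cofactor `u` is at least `8`, which gives two representations
of `t`; for `k = 6` one has `u ≥ 2`, and `6 = 2 * 3 + 3 * 0 = 2 * 0 + 3 * 2` supplies the second
representation (`exists_two_reps`). So `numRep` is at least `2` on all these `t`, while
`101` (with `k ∈ {1, 6}`, `u ∈ {17, 1}`) has no representation and `99` (with `k = 4`, `u = 7`)
only `2 * 10 + 15 + 2 * 32`.
-/


/-- Number of representations of `t` as a non-negative integer linear
combination of the entries of the tuple `x`. -/
noncomputable def numRep (x : List ℕ) (t : ℕ) : ℕ :=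
  Nat.card {c : Fin x.length → ℕ // ∑ i, c i * x.get i = t}

/-- `t` is representable as a non-negative integer linear combination of the
entries of the tuple `x`. -/
def Representable (x : List ℕ) (t : ℕ) : Prop :=
  ∃ c : Fin x.length → ℕ, ∑ i, c i * x.get i = t

/-- No entry of the tuple `x` is a non-negative integer linear combination of
the other entries. -/
def Reasonable (x : List ℕ) : Prop :=
  ∀ i : Fin x.length, ¬ ∃ c : Fin x.length → ℕ,
    c i = 0 ∧ ∑ j, c j * x.get j = x.get i

/-- The 5-tuple `X_n = (2n-2, 2n-1, 2n, 3n-3, 3n)`. -/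
def X (n : ℕ) : List ℕ := [2*n-2, 2*n-1, 2*n, 3*n-3, 3*n]

/-- The n-tuple `Y_n = (n+1, n+4, n+5, n+7, n+8, ..., 2n+1, 2n+3, 2n+4)`. -/
def Y (n : ℕ) : List ℕ :=
  [n+1, n+4, n+5] ++ List.range' (n+7) (n-5) ++ [2*n+3, 2*n+4]

lemma sum_quad (c : Fin [10, 15, 32, 48].length → ℕ) :
    ∑ i, c i * [10, 15, 32, 48].get i
      = c (0 : Fin 4) * 10 + c (1 : Fin 4) * 15 + c (2 : Fin 4) * 32 + c (3 : Fin 4) * 48 :=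
  Fin.sum_univ_four (fun i : Fin 4 => c i * [10, 15, 32, 48].get i)

/-- Finiteness of the set of representations; without it `Nat.card` could take its junk
value `0`. -/
lemma finite_reps (t : ℕ) :
    Finite {c : Fin [10, 15, 32, 48].length → ℕ // ∑ i, c i * [10, 15, 32, 48].get i = t} := by
  refine ((Set.finite_Iic (fun _ : Fin [10, 15, 32, 48].length => t)).subset ?_).to_subtype
  intro c hc
  have h : ∑ i, c i * [10, 15, 32, 48].get i = t := hc
  rw [sum_quad] at h
  have key : ∀ i : Fin 4, c i ≤ t := by
    intro i
    fin_cases i <;> simp only [Fin.reduceFinMk, Fin.zero_eta, Fin.mk_one] <;> omega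
  exact key

lemma exists_two_three {u : ℕ} (hu : 2 ≤ u) : ∃ a b : ℕ, 2 * a + 3 * b = u := by
  rcases Nat.even_or_odd' u with ⟨m, rfl | rfl⟩
  · exact ⟨m, 0, by omega⟩
  · exact ⟨m - 1, 1, by omega⟩

lemma exists_two_three_twice {u : ℕ} (hu : 8 ≤ u) :
    ∃ a b a' b' : ℕ, 2 * a + 3 * b = u ∧ 2 * a' + 3 * b' = u ∧ a ≠ a' := by
  obtain ⟨a, b, h⟩ := exists_two_three (u := u - 6) (by omega)
  exact ⟨a + 3, b, a, b + 2, by omega, by omega, by omega⟩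

lemma exists_two_reps {t : ℕ} (ht : 101 < t ∨ t = 100) :
    ∃ a b c d a' b' c' d' : ℕ, a * 10 + b * 15 + c * 32 + d * 48 = t ∧
      a' * 10 + b' * 15 + c' * 32 + d' * 48 = t ∧ (a ≠ a' ∨ c ≠ c') := by
  by_cases h1 : t % 5 = 1
  · obtain ⟨a, b, h⟩ := exists_two_three (u := (t - 96) / 5) (by omega)
    exact ⟨a, b, 3, 0, a, b, 0, 2, by omega, by omega, by omega⟩
  · obtain ⟨c, d, u, hu, h⟩ : ∃ c d u : ℕ, 8 ≤ u ∧ 5 * u + c * 32 + d * 48 = t := by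
      have : t % 5 = 0 ∨ t % 5 = 2 ∨ t % 5 = 3 ∨ t % 5 = 4 := by omega
      rcases this with h | h | h | h
      · exact ⟨0, 0, t / 5, by omega, by omega⟩
      · exact ⟨1, 0, (t - 32) / 5, by omega, by omega⟩
      · exact ⟨0, 1, (t - 48) / 5, by omega, by omega⟩
      · exact ⟨2, 0, (t - 64) / 5, by omega, by omega⟩
    obtain ⟨a, b, a', b', h, h', hne⟩ := exists_two_three_twice hu
    exact ⟨a, b, c, d, a', b', c, d, by omega, by omega, by omega⟩

lemma one_lt_numRep {t : ℕ} (ht : 101 < t ∨ t = 100) : 1 < numRep [10, 15, 32, 48] t := by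
  obtain ⟨a, b, c, d, a', b', c', d', h, h', hne⟩ := exists_two_reps ht
  have := finite_reps t
  rw [numRep, Finite.one_lt_card_iff_nontrivial]
  refine ⟨⟨![a, b, c, d], (sum_quad _).trans h⟩, ⟨![a', b', c', d'], (sum_quad _).trans h'⟩, ?_⟩
  intro heq
  have hfun : (![a, b, c, d] : Fin 4 → ℕ) = ![a', b', c', d'] := congrArg Subtype.val heq
  have ha : a = a' := congrFun hfun 0
  have hc : c = c' := congrFun hfun 2
  omega

lemma numRep_101 : numRep [10, 15, 32, 48] 101 = 0 := by
  have : IsEmpty {c : Fin [10, 15, 32, 48].length → ℕ //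
      ∑ i, c i * [10, 15, 32, 48].get i = 101} := by
    refine ⟨fun ⟨c, hc⟩ => ?_⟩
    rw [sum_quad] at hc
    have h2 : c (2 : Fin 4) ≤ 3 := by omega
    have h3 : c (3 : Fin 4) ≤ 2 := by omega
    interval_cases c (2 : Fin 4) <;> interval_cases c (3 : Fin 4) <;> omega
  exact Nat.card_of_isEmpty

lemma numRep_99 : numRep [10, 15, 32, 48] 99 = 1 := by
  have uniq : ∀ c : Fin 4 → ℕ, c 0 * 10 + c 1 * 15 + c 2 * 32 + c 3 * 48 = 99 →
      c = ![2, 1, 2, 0] := by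
    intro c h
    have h23 : c 2 = 2 ∧ c 3 = 0 := by
      have h2 : c 2 ≤ 3 := by omega
      have h3 : c 3 ≤ 2 := by omega
      interval_cases c 2 <;> interval_cases c 3 <;> omega
    obtain ⟨h2, h3⟩ := h23
    have h1 : c 1 = 1 := by omega
    have h0 : c 0 = 2 := by omega
    funext i
    fin_cases i
    · exact h0
    · exact h1
    · exact h2
    · exact h3
  rw [numRep, Nat.card_eq_one_iff_exists]
  refine ⟨⟨![2, 1, 2, 0], (sum_quad _).trans rfl⟩, fun ⟨c, hc⟩ => Subtype.ext ?_⟩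
  rw [sum_quad] at hc
  exact uniq c hc

/-- For the quadruple `(10, 15, 32, 48)`: the largest integer not representable
as a non-negative integer linear combination is `101`, and the largest integer
having exactly one such representation is `99`; in particular
`g₀(10,15,32,48) = 101 > 99 = g₁(10,15,32,48)`. -/
theorem stmt15 :
    IsGreatest {t : ℕ | numRep [10, 15, 32, 48] t = 0} 101 ∧
      IsGreatest {t : ℕ | numRep [10, 15, 32, 48] t = 1} 99 := by
  refine ⟨⟨numRep_101, fun t ht => ?_⟩, ⟨numRep_99, fun t ht => ?_⟩⟩
  · have ht : numRep [10, 15, 32, 48] t = 0 := ht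
    by_contra hlt
    have := one_lt_numRep (t := t) (by omega)
    omega
  · have ht : numRep [10, 15, 32, 48] t = 1 := ht
    by_contra hlt
    have hne : t ≠ 101 := by
      rintro rfl
      have := numRep_101
      omega
    have := one_lt_numRep (t := t) (by omega)
    omega
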